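/- Every discrete reachability bidding game with random-based tie-breaking that is played on a DAG is determined: val1(G,c) = val2(G,c) at every configuration c. -/

import Mathlib

/-!
The proof is backward induction. Fix the horizon `T = card V`. On a DAG every play is absorbed in
`t1` or `t2` after `T` rounds, so Player 1 wins iff the token is at `t1` at time `T`
(`wins_iff`), and it suffices to solve the game with `n` rounds remaining, for all `n ≤ T`.

Let `gval n c` be the max-min value of that game, defined by recursion on `n`: in the first round
the bids `b1, b2` yield `W b1` if `b1 > b2`, `L b2` if `b1 < b2`, and the average of `W b1` and
`L b1` on a tie, where `W` (`winVal`) is the best continuation for Player 1 after paying his bid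
and `L` (`loseVal`) the best continuation for Player 2 after paying hers. Since `gval n` is
increasing in Player 1's budget and decreasing in Player 2's (`gval_mono`), `W` is antitone, `L` is
monotone, and `L 0 ≤ W 0`. Such a bidding matrix always has a saddle point in pure bids
(`exists_saddle`): if `k` is the largest common bid with `L k ≤ W k`, its value is the median of
`W (k + 1)`, `L (k + 1)` and the average of `W k` and `L k`, and both players have an optimal bid
in `{k, k + 1}`.

The players then play the optimal bids and successors for the number of rounds remaining, which is
read off the length of the history. Since the resolution of the next tie is independent of those of
the previous ones, the winning probability obeys a one-step recursion (`measure_cyl_inter`), and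
comparing it with the recursion for `gval` shows that each player guarantees `gval T c`.
-/

/-! # Discrete reachability bidding games with random-based tie-breaking -/

namespace RBid

open MeasureTheory

/-- A discrete reachability bidding game with random-based tie-breaking: a
finite directed graph in which every vertex has an outgoing edge, a total
budget `N`, and a target set for Player 1 (Player 1 is `0 : Fin 2`, Player 2
is `1 : Fin 2`). -/
structure Game (V : Type) where
  E : V → V → Prop
  succ_exists : ∀ v, ∃ u, E v u
  N : ℕ
  target : Set V

/-- A configuration: token position and the two budgets. -/
structure Conf (V : Type) where
  v : V
  B1 : ℕ
  B2 : ℕ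

/-- A round as recorded in histories: configuration, the two bids, and the
winner of the bidding. -/
abbrev Round (V : Type) := Conf V × ℕ × ℕ × Fin 2

abbrev Hist (V : Type) := List (Round V)

/-- A pure strategy: a bid for each history and configuration, and a successor
choice upon winning a bidding. -/
structure Strat (V : Type) where
  bid : Hist V → Conf V → ℕ
  move : Hist V → Conf V → ℕ → ℕ → V

def Legal {V : Type} (G : Game V) (i : Fin 2) (σ : Strat V) : Prop :=
  (∀ h c, σ.bid h c ≤ (if i = 0 then c.B1 else c.B2)) ∧
  (∀ h c b1 b2, G.E c.v (σ.move h c b1 b2))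

/-- One round of the play: `ω k` resolves the `k`-th tie (the third component
of the state counts the ties seen so far). -/
def stepPlay {V : Type} (G : Game V) (σ1 σ2 : Strat V) (ω : ℕ → Fin 2)
    (p : Hist V × Conf V × ℕ) : Hist V × Conf V × ℕ :=
  let h := p.1
  let c := p.2.1
  let k := p.2.2
  let b1 := σ1.bid h c
  let b2 := σ2.bid h c
  let w : Fin 2 := if b2 < b1 then 0 else if b1 < b2 then 1 else ω k
  let d := if w = 0 then σ1.move h c b1 b2 else σ2.move h c b1 b2
  let c' : Conf V :=
    if w = 0 then ⟨d, c.B1 - b1, c.B2 + b1⟩ else ⟨d, c.B1 + b2, c.B2 - b2⟩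
  (h ++ [(c, b1, b2, w)], c', if b1 = b2 then k + 1 else k)

def playAux {V : Type} (G : Game V) (σ1 σ2 : Strat V) (ω : ℕ → Fin 2)
    (c0 : Conf V) : ℕ → Hist V × Conf V × ℕ
  | 0 => ([], c0, 0)
  | n + 1 => stepPlay G σ1 σ2 ω (playAux G σ1 σ2 ω c0 n)

/-- The vertex path of the play of `σ1` against `σ2` from `c0`, with ties
resolved by `ω`. -/
def path {V : Type} (G : Game V) (σ1 σ2 : Strat V) (ω : ℕ → Fin 2)
    (c0 : Conf V) (n : ℕ) : V :=
  (playAux G σ1 σ2 ω c0 n).2.1.v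

/-- Player 1 wins the play determined by `σ1, σ2, ω` from `c0`: the vertex
path visits the target. -/
def Wins {V : Type} (G : Game V) (σ1 σ2 : Strat V) (ω : ℕ → Fin 2)
    (c0 : Conf V) : Prop :=
  ∃ n, path G σ1 σ2 ω c0 n ∈ G.target

/-- `μ` is the fair Bernoulli product measure on `{1,2}^ℕ` (here `Fin 2`-valued
sequences, whose `k`-th entry resolves the `k`-th tie): the measure of every
cylinder constraining finitely many coordinates is `(1/2)^(number of
constrained coordinates)`. -/
def IsCoin (μ : Measure (ℕ → Fin 2)) : Prop :=
  ∀ (s : Finset ℕ) (f : ℕ → Fin 2),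
    μ {ω | ∀ k ∈ s, ω k = f k} = (1 / 2 : ENNReal) ^ s.card

/-- The probability that Player 1 wins the game from `c` when the players use
the pure strategies `σ1, σ2` and ties are resolved by independent fair coin
flips (`μ` being the fair Bernoulli product measure). -/
noncomputable def Pr {V : Type} (μ : Measure (ℕ → Fin 2)) (G : Game V)
    (σ1 σ2 : Strat V) (c : Conf V) : ENNReal :=
  μ {ω | Wins G σ1 σ2 ω c}

/-- `val1`: the value Player 1 can guarantee when revealing his pure strategy
first. -/
noncomputable def val1 {V : Type} (μ : Measure (ℕ → Fin 2)) (G : Game V)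
    (c : Conf V) : ENNReal :=
  ⨆ σ1 : {σ : Strat V // Legal G 0 σ}, ⨅ σ2 : {σ : Strat V // Legal G 1 σ},
    Pr μ G σ1.1 σ2.1 c

/-- `val2`: the value when Player 2 reveals his pure strategy first. -/
noncomputable def val2 {V : Type} (μ : Measure (ℕ → Fin 2)) (G : Game V)
    (c : Conf V) : ENNReal :=
  ⨅ σ2 : {σ : Strat V // Legal G 1 σ}, ⨆ σ1 : {σ : Strat V // Legal G 0 σ},
    Pr μ G σ1.1 σ2.1 c

/-- `G` is played on a DAG with sinks `t1` (the target) and `t2`: the only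
outgoing edges of `t1` and `t2` are self-loops, no other vertex lies on a
cycle, and the target set is `{t1}`. -/
def IsDAG {V : Type} (G : Game V) (t1 t2 : V) : Prop :=
  (∀ u, G.E t1 u ↔ u = t1) ∧ (∀ u, G.E t2 u ↔ u = t2) ∧ t1 ≠ t2 ∧
    (∀ v, v ≠ t1 → v ≠ t2 → ¬ Relation.TransGen G.E v v) ∧
    G.target = {t1}

end RBid

namespace RBid

open MeasureTheory

/-! ### The one-round bidding matrix -/

/-- The outcome of one round with bids `b1`, `b2`, if Player 1 gets `W b1` from winning the
bidding, and `L b2` from losing it; a tie yields the average. -/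
noncomputable def bidOutcome (W L : ℕ → ENNReal) (b1 b2 : ℕ) : ENNReal :=
  if b2 < b1 then W b1 else if b1 < b2 then L b2 else (W b1 + L b2) / 2

lemma le_avg {x a b : ENNReal} (ha : x ≤ a) (hb : x ≤ b) : x ≤ (a + b) / 2 := by
  rw [ENNReal.le_div_iff_mul_le (by simp) (by simp), mul_two]
  exact add_le_add ha hb

lemma avg_le {x a b : ENNReal} (ha : a ≤ x) (hb : b ≤ x) : (a + b) / 2 ≤ x := by
  apply ENNReal.div_le_of_le_mul
  rw [mul_two]
  exact add_le_add ha hb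

lemma avg_mono {a b a' b' : ENNReal} (ha : a ≤ a') (hb : b ≤ b') :
    (a + b) / 2 ≤ (a' + b') / 2 :=
  ENNReal.div_le_div_right (add_le_add ha hb) 2

lemma avg_self (x : ENNReal) : (x + x) / 2 = x :=
  le_antisymm (avg_le le_rfl le_rfl) (le_avg le_rfl le_rfl)

lemma bidOutcome_mono {W L W' L' : ℕ → ENNReal} (hW : ∀ b, W b ≤ W' b) (hL : ∀ b, L b ≤ L' b)
    (b1 b2 : ℕ) : bidOutcome W L b1 b2 ≤ bidOutcome W' L' b1 b2 := by
  unfold bidOutcome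
  split_ifs
  · exact hW _
  · exact hL _
  · exact avg_mono (hW _) (hL _)

/-- Bidding `k` guarantees Player 1 the value `x`. -/
lemma le_bidOutcome {W L : ℕ → ENNReal} (hL : Monotone L) {B2 k : ℕ} {x : ENNReal}
    (hw : x ≤ W k) (ha : k ≤ B2 → x ≤ (W k + L k) / 2) (hl : k + 1 ≤ B2 → x ≤ L (k + 1)) :
    ∀ b2 ≤ B2, x ≤ bidOutcome W L k b2 := by
  intro b2 hb
  unfold bidOutcome
  split_ifs with h1 h2
  · exact hw
  · exact (hl (by omega)).trans (hL (by omega))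
  · obtain rfl : k = b2 := by omega
    exact ha hb

/-- Bidding `k` guarantees Player 2 the value `x`. -/
lemma bidOutcome_le {W L : ℕ → ENNReal} (hW : Antitone W) {B1 k : ℕ} {x : ENNReal}
    (hl : L k ≤ x) (ha : k ≤ B1 → (W k + L k) / 2 ≤ x) (hw : k + 1 ≤ B1 → W (k + 1) ≤ x) :
    ∀ b1 ≤ B1, bidOutcome W L b1 k ≤ x := by
  intro b1 hb
  unfold bidOutcome
  split_ifs with h1 h2
  · exact (hW (by omega)).trans (hw (by omega))
  · exact hl
  · obtain rfl : b1 = k := by omega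
    exact ha hb

/-- The bidding matrix has a saddle point in pure bids. -/
lemma exists_saddle {W L : ℕ → ENNReal} (hW : Antitone W) (hL : Monotone L) (h0 : L 0 ≤ W 0)
    (B1 B2 : ℕ) : ∃ x, (∃ b1 ≤ B1, ∀ b2 ≤ B2, x ≤ bidOutcome W L b1 b2) ∧
      ∃ b2 ≤ B2, ∀ b1 ≤ B1, bidOutcome W L b1 b2 ≤ x := by
  classical
  obtain ⟨k, hk1, hk2, hk, hmax⟩ : ∃ k, k ≤ B1 ∧ k ≤ B2 ∧ L k ≤ W k ∧
      (k + 1 ≤ B1 → k + 1 ≤ B2 → W (k + 1) ≤ L (k + 1)) := by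
    let P : ℕ → Prop := fun k => k ≤ B1 ∧ k ≤ B2 ∧ L k ≤ W k
    have hP : P (Nat.findGreatest P B1) :=
      Nat.findGreatest_spec (P := P) (Nat.zero_le _) ⟨Nat.zero_le _, Nat.zero_le _, h0⟩
    refine ⟨_, hP.1, hP.2.1, hP.2.2, fun h1 h2 => ?_⟩
    by_contra! hlt
    exact Nat.findGreatest_is_greatest (P := P) (Nat.lt_succ_self _) h1 ⟨h1, h2, hlt.le⟩
  have haW : (W k + L k) / 2 ≤ W k := avg_le le_rfl hk
  have hLa : L k ≤ (W k + L k) / 2 := le_avg hk le_rfl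
  -- The value is the median of `W (k + 1)`, `L (k + 1)` and the average at `k`, where
  -- the first two count as `-∞` and `∞` if the corresponding bid exceeds the budget.
  by_cases hA : k + 1 ≤ B1 ∧ (W k + L k) / 2 ≤ W (k + 1)
  · obtain ⟨h1, hA⟩ := hA
    refine ⟨W (k + 1), ⟨k + 1, h1, le_bidOutcome hL le_rfl ?_ ?_⟩,
      k, hk2, bidOutcome_le hW (hLa.trans hA) (fun _ => hA) fun _ => le_rfl⟩
    · exact fun h2 => le_avg le_rfl (hmax h1 h2)
    · intro h2
      exact (hmax h1 (by omega)).trans (hL (by omega))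
  · by_cases hB : k + 1 ≤ B2 ∧ L (k + 1) ≤ (W k + L k) / 2
    · obtain ⟨h2, hB⟩ := hB
      refine ⟨L (k + 1), ⟨k, hk1, le_bidOutcome hL (hB.trans haW) (fun _ => hB) fun _ => le_rfl⟩,
        k + 1, h2, bidOutcome_le hW le_rfl ?_ ?_⟩
      · exact fun h1 => avg_le (hmax h1 h2) le_rfl
      · intro h1
        exact (hW (by omega)).trans (hmax (by omega) h2)
    · refine ⟨(W k + L k) / 2, ⟨k, hk1, le_bidOutcome hL haW (fun _ => le_rfl) fun h => ?_⟩,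
        k, hk2, bidOutcome_le hW hLa (fun _ => le_rfl) fun h => ?_⟩
      · exact (not_le.1 fun h' => hB ⟨h, h'⟩).le
      · exact (not_le.1 fun h' => hA ⟨h, h'⟩).le
/-! ### Values of the finite-horizon games -/

section

variable {V : Type}

/-- The best continuation for Player 1 if he wins the bidding at `c` with the bid `b`, the
continuation being worth `g`. -/
noncomputable def winVal (G : Game V) (g : Conf V → ENNReal) (c : Conf V) (b : ℕ) : ENNReal :=
  ⨆ u : {u // G.E c.v u}, g ⟨u, c.B1 - b, c.B2 + b⟩

/-- The best continuation for Player 2 if she wins the bidding at `c` with the bid `b`, the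
continuation being worth `g`. -/
noncomputable def loseVal (G : Game V) (g : Conf V → ENNReal) (c : Conf V) (b : ℕ) : ENNReal :=
  ⨅ u : {u // G.E c.v u}, g ⟨u, c.B1 + b, c.B2 - b⟩

/-- The max-min value, computed by backward induction, of the game in which Player 1 wins iff
the token is in the target set after exactly `n` rounds. -/
noncomputable def gval (G : Game V) : ℕ → Conf V → ENNReal
  | 0 => fun c => G.target.indicator 1 c.v
  | n + 1 => fun c => ⨆ b1 ≤ c.B1, ⨅ b2 ≤ c.B2,
      bidOutcome (winVal G (gval G n) c) (loseVal G (gval G n) c) b1 b2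

/-- The value is increasing in the budget of Player 1 and decreasing in that of Player 2. -/
lemma gval_mono (G : Game V) (n : ℕ) (v : V) {B1 B2 B1' B2' : ℕ} (h1 : B1 ≤ B1')
    (h2 : B2' ≤ B2) : gval G n ⟨v, B1, B2⟩ ≤ gval G n ⟨v, B1', B2'⟩ := by
  induction n generalizing v B1 B2 B1' B2' with
  | zero => exact le_rfl
  | succ n ih =>
    refine iSup₂_le fun b1 hb1 => le_iSup₂_of_le b1 (hb1.trans h1) ?_
    refine le_iInf₂ fun b2 hb2 => iInf₂_le_of_le b2 (hb2.trans h2) ?_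
    refine bidOutcome_mono (fun b => ?_) (fun b => ?_) b1 b2
    · exact iSup_mono fun u => ih _ (by dsimp only; omega) (by dsimp only; omega)
    · exact iInf_mono fun u => ih _ (by dsimp only; omega) (by dsimp only; omega)

/-- Both players have an optimal pure bid in the first round. -/
lemma exists_optimal_bids (G : Game V) (n : ℕ) (c : Conf V) :
    (∃ b1 ≤ c.B1, ∀ b2 ≤ c.B2, gval G (n + 1) c ≤
        bidOutcome (winVal G (gval G n) c) (loseVal G (gval G n) c) b1 b2) ∧
      ∃ b2 ≤ c.B2, ∀ b1 ≤ c.B1,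
        bidOutcome (winVal G (gval G n) c) (loseVal G (gval G n) c) b1 b2 ≤
          gval G (n + 1) c := by
  have hW : Antitone (winVal G (gval G n) c) := fun a b hab =>
    iSup_mono fun u => gval_mono G n _ (by omega) (by omega)
  have hL : Monotone (loseVal G (gval G n) c) := fun a b hab =>
    iInf_mono fun u => gval_mono G n _ (by omega) (by omega)
  have h0 : loseVal G (gval G n) c 0 ≤ winVal G (gval G n) c 0 := by
    obtain ⟨u, hu⟩ := G.succ_exists c.v
    exact iInf_le_of_le ⟨u, hu⟩ (le_iSup_of_le ⟨u, hu⟩ le_rfl)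
  obtain ⟨x, ⟨b1, hb1, h1⟩, b2, hb2, h2⟩ := exists_saddle hW hL h0 c.B1 c.B2
  have hx : gval G (n + 1) c = x := by
    apply le_antisymm
    · exact iSup₂_le fun a ha => iInf₂_le_of_le b2 hb2 (h2 a ha)
    · exact le_iSup₂_of_le b1 hb1 (le_iInf₂ h1)
  rw [hx]
  exact ⟨⟨b1, hb1, h1⟩, b2, hb2, h2⟩

lemma exists_optimal_succ [Finite V] (G : Game V) (g : Conf V → ENNReal) (c : Conf V) (b : ℕ) :
    (∃ u, G.E c.v u ∧ winVal G g c b ≤ g ⟨u, c.B1 - b, c.B2 + b⟩) ∧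
      ∃ u, G.E c.v u ∧ g ⟨u, c.B1 + b, c.B2 - b⟩ ≤ loseVal G g c b := by
  have : Nonempty {u // G.E c.v u} := let ⟨u, hu⟩ := G.succ_exists c.v; ⟨⟨u, hu⟩⟩
  obtain ⟨u, hu⟩ := exists_eq_ciSup_of_finite
    (f := fun u : {u // G.E c.v u} => g ⟨u, c.B1 - b, c.B2 + b⟩)
  obtain ⟨w, hw⟩ := exists_eq_ciInf_of_finite
    (f := fun u : {u // G.E c.v u} => g ⟨u, c.B1 + b, c.B2 - b⟩)
  exact ⟨⟨u, u.2, hu.ge⟩, w, w.2, hw.le⟩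

/-! ### Winning probabilities -/

/-- The probability that the token is in the target set after `n` more rounds from the state
`p`. One tie-break is drawn in every round; it is ignored if the bids differ. -/
noncomputable def winProb (G : Game V) (σ1 σ2 : Strat V) :
    ℕ → Hist V × Conf V × ℕ → ENNReal
  | 0, p => G.target.indicator 1 p.2.1.v
  | n + 1, p => (winProb G σ1 σ2 n (stepPlay G σ1 σ2 (fun _ => 0) p) +
      winProb G σ1 σ2 n (stepPlay G σ1 σ2 (fun _ => 1) p)) / 2

lemma stepPlay_congr (G : Game V) (σ1 σ2 : Strat V) {ω ω' : ℕ → Fin 2}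
    (p : Hist V × Conf V × ℕ) (h : ω p.2.2 = ω' p.2.2) :
    stepPlay G σ1 σ2 ω p = stepPlay G σ1 σ2 ω' p := by
  simp only [stepPlay, h]

lemma stepPlay_of_ne (G : Game V) (σ1 σ2 : Strat V) (ω ω' : ℕ → Fin 2)
    (p : Hist V × Conf V × ℕ) (h : σ1.bid p.1 p.2.1 ≠ σ2.bid p.1 p.2.1) :
    stepPlay G σ1 σ2 ω p = stepPlay G σ1 σ2 ω' p := by
  rcases lt_or_gt_of_ne h with h | h
  · simp [stepPlay, h, h.not_gt]
  · simp [stepPlay, h]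

/-- The set of tie-break sequences that agree with `f` on the first `k` ties. -/
def cyl (f : ℕ → Fin 2) (k : ℕ) : Set (ℕ → Fin 2) := {ω | ∀ i ∈ Finset.range k, ω i = f i}

lemma cyl_inter_eq (f : ℕ → Fin 2) (k : ℕ) (i : Fin 2) :
    cyl f k ∩ {ω | ω k = i} = cyl (Function.update f k i) (k + 1) := by
  ext ω
  simp only [cyl, Set.mem_inter_iff, Set.mem_ofPred_eq, Finset.mem_range]
  constructor
  · rintro ⟨h1, h2⟩ j hj
    rcases eq_or_ne j k with rfl | hjk
    · simpa using h2
    · rw [Function.update_of_ne hjk]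
      exact h1 j (by omega)
  · intro h
    refine ⟨fun j hj => ?_, by simpa using h k (by omega)⟩
    have := h j (by omega)
    rwa [Function.update_of_ne (by omega)] at this

/-- `winProb` is the conditional winning probability given the outcomes of the ties that
precede the state `p`. -/
lemma measure_cyl_inter {μ : Measure (ℕ → Fin 2)} (hμ : IsCoin μ) (G : Game V)
    (σ1 σ2 : Strat V) (n : ℕ) (p : Hist V × Conf V × ℕ) (f : ℕ → Fin 2) :
    μ (cyl f p.2.2 ∩ {ω | ((stepPlay G σ1 σ2 ω)^[n] p).2.1.v ∈ G.target}) =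
      (1 / 2) ^ p.2.2 * winProb G σ1 σ2 n p := by
  induction n generalizing p f with
  | zero =>
    have hc : μ (cyl f p.2.2) = (1 / 2) ^ p.2.2 := by
      rw [cyl, hμ, Finset.card_range]
    by_cases hp : p.2.1.v ∈ G.target
    · simp [winProb, hp, hc]
    · simp [winProb, hp]
  | succ n ih =>
    simp only [Function.iterate_succ_apply, winProb]
    by_cases hb : σ1.bid p.1 p.2.1 = σ2.bid p.1 p.2.1
    · -- After a tie, condition on its resolution `ω k`.
      have hk : ∀ ω, (stepPlay G σ1 σ2 ω p).2.2 = p.2.2 + 1 := fun ω => by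
        simp [stepPlay, hb]
      have key : ∀ i : Fin 2, μ (cyl f p.2.2 ∩ {ω | ((stepPlay G σ1 σ2 ω)^[n]
          (stepPlay G σ1 σ2 ω p)).2.1.v ∈ G.target} ∩ {ω | ω p.2.2 = i}) =
          (1 / 2) ^ (p.2.2 + 1) * winProb G σ1 σ2 n (stepPlay G σ1 σ2 (fun _ => i) p) := by
        intro i
        have := ih (stepPlay G σ1 σ2 (fun _ => i) p) (Function.update f p.2.2 i)
        rw [hk, ← cyl_inter_eq] at this
        rw [← this]
        congr 1
        ext ω
        simp only [Set.mem_inter_iff, Set.mem_ofPred_eq]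
        constructor
        · rintro ⟨⟨h1, h2⟩, h3⟩
          rw [stepPlay_congr G σ1 σ2 (ω' := fun _ => i) p h3] at h2
          exact ⟨⟨h1, h3⟩, h2⟩
        · rintro ⟨⟨h1, h3⟩, h2⟩
          rw [← stepPlay_congr G σ1 σ2 (ω := ω) p h3] at h2
          exact ⟨⟨h1, h2⟩, h3⟩
      have hm : MeasurableSet {ω : ℕ → Fin 2 | ω p.2.2 = 0} :=
        measurable_pi_apply p.2.2 (measurableSet_singleton 0)
      have hcompl : {ω : ℕ → Fin 2 | ω p.2.2 = 0}ᶜ = {ω | ω p.2.2 = 1} := by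
        ext ω
        simp only [Set.mem_compl_iff, Set.mem_ofPred_eq]
        omega
      rw [← measure_inter_add_sdiff _ hm, Set.sdiff_eq, hcompl, key 0, key 1, pow_succ,
        one_div, ENNReal.div_eq_inv_mul]
      ring
    · have hk : ∀ ω, (stepPlay G σ1 σ2 ω p).2.2 = p.2.2 := fun ω => by
        simp [stepPlay, hb]
      have h1 : ∀ ω, stepPlay G σ1 σ2 ω p = stepPlay G σ1 σ2 (fun _ => 0) p :=
        fun ω => stepPlay_of_ne _ _ _ _ _ _ hb
      have := ih (stepPlay G σ1 σ2 (fun _ => 0) p) f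
      rw [hk] at this
      rw [h1 (fun _ => 1), avg_self, ← this]
      simp only [h1]

lemma playAux_eq_iterate (G : Game V) (σ1 σ2 : Strat V) (ω : ℕ → Fin 2) (c : Conf V) (n : ℕ) :
    playAux G σ1 σ2 ω c n = (stepPlay G σ1 σ2 ω)^[n] ([], c, 0) := by
  induction n with
  | zero => rfl
  | succ n ih => rw [Function.iterate_succ_apply', ← ih, playAux]

lemma measure_path {μ : Measure (ℕ → Fin 2)} (hμ : IsCoin μ) (G : Game V)
    (σ1 σ2 : Strat V) (c : Conf V) (n : ℕ) :
    μ {ω | path G σ1 σ2 ω c n ∈ G.target} = winProb G σ1 σ2 n ([], c, 0) := by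
  have := measure_cyl_inter hμ G σ1 σ2 n ([], c, 0) (fun _ => 0)
  simpa [cyl, path, playAux_eq_iterate] using this

/-! ### Optimal strategies -/

lemma length_stepPlay (G : Game V) (σ1 σ2 : Strat V) (ω : ℕ → Fin 2)
    (p : Hist V × Conf V × ℕ) : (stepPlay G σ1 σ2 ω p).1.length = p.1.length + 1 := by
  simp [stepPlay]

/-- If Player 1 moves optimally, a round is worth at least its entry in the bidding matrix. -/
lemma bidOutcome_le_avg_step (G : Game V) (σ1 σ2 : Strat V) (h2 : Legal G 1 σ2)
    (g : Conf V → ENNReal) (p : Hist V × Conf V × ℕ)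
    (hmove : ∀ b1 b2, winVal G g p.2.1 b1 ≤
      g ⟨σ1.move p.1 p.2.1 b1 b2, p.2.1.B1 - b1, p.2.1.B2 + b1⟩) :
    bidOutcome (winVal G g p.2.1) (loseVal G g p.2.1) (σ1.bid p.1 p.2.1) (σ2.bid p.1 p.2.1) ≤
      (g (stepPlay G σ1 σ2 (fun _ => 0) p).2.1 + g (stepPlay G σ1 σ2 (fun _ => 1) p).2.1) / 2 := by
  have hlose : ∀ b1 b2, loseVal G g p.2.1 b2 ≤
      g ⟨σ2.move p.1 p.2.1 b1 b2, p.2.1.B1 + b2, p.2.1.B2 - b2⟩ :=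
    fun b1 b2 => iInf_le_of_le ⟨_, h2.2 _ _ b1 b2⟩ le_rfl
  unfold bidOutcome
  split_ifs with ha hb
  · simpa [stepPlay, ha, avg_self] using hmove _ _
  · simpa [stepPlay, hb, hb.not_gt, avg_self] using hlose _ _
  · simpa [stepPlay, ha, hb] using avg_mono (hmove _ _) (hlose _ _)

/-- If Player 2 moves optimally, a round is worth at most its entry in the bidding matrix. -/
lemma avg_step_le_bidOutcome (G : Game V) (σ1 σ2 : Strat V) (h1 : Legal G 0 σ1)
    (g : Conf V → ENNReal) (p : Hist V × Conf V × ℕ)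
    (hmove : ∀ b1 b2, g ⟨σ2.move p.1 p.2.1 b1 b2, p.2.1.B1 + b2, p.2.1.B2 - b2⟩ ≤
      loseVal G g p.2.1 b2) :
    (g (stepPlay G σ1 σ2 (fun _ => 0) p).2.1 + g (stepPlay G σ1 σ2 (fun _ => 1) p).2.1) / 2 ≤
      bidOutcome (winVal G g p.2.1) (loseVal G g p.2.1)
        (σ1.bid p.1 p.2.1) (σ2.bid p.1 p.2.1) := by
  have hwin : ∀ b1 b2, g ⟨σ1.move p.1 p.2.1 b1 b2, p.2.1.B1 - b1, p.2.1.B2 + b1⟩ ≤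
      winVal G g p.2.1 b1 :=
    fun b1 b2 => le_iSup_of_le ⟨_, h1.2 _ _ b1 b2⟩ le_rfl
  unfold bidOutcome
  split_ifs with ha hb
  · simpa [stepPlay, ha, avg_self] using hwin _ _
  · simpa [stepPlay, hb, hb.not_gt, avg_self] using hmove _ _
  · simpa [stepPlay, ha, hb] using avg_mono (hwin _ _) (hmove _ _)

/-- Player 1 has a strategy that guarantees `gval G T` in the game with horizon `T`. -/
lemma exists_strat_one [Finite V] (G : Game V) (T : ℕ) : ∃ σ1, Legal G 0 σ1 ∧
    ∀ σ2, Legal G 1 σ2 → ∀ c, gval G T c ≤ winProb G σ1 σ2 T ([], c, 0) := by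
  choose bid hbid hopt using fun n c => (exists_optimal_bids G n c).1
  choose move hE hmove using fun n c b => (exists_optimal_succ G (gval G n) c b).1
  -- After the history `h`, there are `T - 1 - h.length` rounds to go beyond the current one.
  let σ1 : Strat V :=
    ⟨fun h c => bid (T - 1 - h.length) c, fun h c b1 _ => move (T - 1 - h.length) c b1⟩
  refine ⟨σ1, ⟨fun h c => by simpa using hbid _ c, fun h c b1 _ => hE _ c b1⟩, ?_⟩
  intro σ2 h2 c
  have key : ∀ n (p : Hist V × Conf V × ℕ), p.1.length + n = T →
      gval G n p.2.1 ≤ winProb G σ1 σ2 n p := by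
    intro n
    induction n with
    | zero => exact fun p _ => le_rfl
    | succ n ih =>
      intro p hp
      have hn : T - 1 - p.1.length = n := by omega
      calc gval G (n + 1) p.2.1
          ≤ bidOutcome (winVal G (gval G n) p.2.1) (loseVal G (gval G n) p.2.1)
              (σ1.bid p.1 p.2.1) (σ2.bid p.1 p.2.1) := by
            simpa only [σ1, hn] using hopt n p.2.1 _ (by simpa using h2.1 p.1 p.2.1)
        _ ≤ _ := bidOutcome_le_avg_step G σ1 σ2 h2 (gval G n) p fun b1 b2 => by
            simpa only [σ1, hn] using hmove n p.2.1 b1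
        _ ≤ winProb G σ1 σ2 (n + 1) p :=
            avg_mono (ih _ (by rw [length_stepPlay]; omega)) (ih _ (by rw [length_stepPlay]; omega))
  exact key T ([], c, 0) (by simp)

/-- Player 2 has a strategy that guarantees `gval G T` in the game with horizon `T`. -/
lemma exists_strat_two [Finite V] (G : Game V) (T : ℕ) : ∃ σ2, Legal G 1 σ2 ∧
    ∀ σ1, Legal G 0 σ1 → ∀ c, winProb G σ1 σ2 T ([], c, 0) ≤ gval G T c := by
  choose bid hbid hopt using fun n c => (exists_optimal_bids G n c).2
  choose move hE hmove using fun n c b => (exists_optimal_succ G (gval G n) c b).2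
  let σ2 : Strat V :=
    ⟨fun h c => bid (T - 1 - h.length) c, fun h c _ b2 => move (T - 1 - h.length) c b2⟩
  refine ⟨σ2, ⟨fun h c => by simpa using hbid _ c, fun h c _ b2 => hE _ c b2⟩, ?_⟩
  intro σ1 h1 c
  have key : ∀ n (p : Hist V × Conf V × ℕ), p.1.length + n = T →
      winProb G σ1 σ2 n p ≤ gval G n p.2.1 := by
    intro n
    induction n with
    | zero => exact fun p _ => le_rfl
    | succ n ih =>
      intro p hp
      have hn : T - 1 - p.1.length = n := by omega
      calc winProb G σ1 σ2 (n + 1) p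
          ≤ _ := avg_mono (ih _ (by rw [length_stepPlay]; omega))
            (ih _ (by rw [length_stepPlay]; omega))
        _ ≤ bidOutcome (winVal G (gval G n) p.2.1) (loseVal G (gval G n) p.2.1)
              (σ1.bid p.1 p.2.1) (σ2.bid p.1 p.2.1) :=
            avg_step_le_bidOutcome G σ1 σ2 h1 (gval G n) p fun b1 b2 => by
              simpa only [σ2, hn] using hmove n p.2.1 b2
        _ ≤ gval G (n + 1) p.2.1 := by
            simpa only [σ2, hn] using hopt n p.2.1 _ (by simpa using h1.1 p.1 p.2.1)
  exact key T ([], c, 0) (by simp)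

/-! ### Plays on a DAG -/

lemma path_edge (G : Game V) {σ1 σ2 : Strat V} (h1 : Legal G 0 σ1) (h2 : Legal G 1 σ2)
    (ω : ℕ → Fin 2) (c : Conf V) (n : ℕ) :
    G.E (path G σ1 σ2 ω c n) (path G σ1 σ2 ω c (n + 1)) := by
  simp only [path, playAux, stepPlay]
  split_ifs
  all_goals first | exact h1.2 _ _ _ _ | exact h2.2 _ _ _ _

/-- On a DAG, Player 1 wins iff the token is at `t1` after `card V` rounds. -/
lemma wins_iff [Fintype V] {G : Game V} {t1 t2 : V} (hdag : IsDAG G t1 t2)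
    {σ1 σ2 : Strat V} (h1 : Legal G 0 σ1) (h2 : Legal G 1 σ2) (ω : ℕ → Fin 2) (c : Conf V) :
    Wins G σ1 σ2 ω c ↔ path G σ1 σ2 ω c (Fintype.card V) ∈ G.target := by
  refine ⟨?_, fun h => ⟨_, h⟩⟩
  obtain ⟨e1, e2, hne, hacyc, ht⟩ := hdag
  set x := path G σ1 σ2 ω c
  have hx : ∀ n, G.E (x n) (x (n + 1)) := path_edge G h1 h2 ω c
  have abs1 : ∀ m n, m ≤ n → x m = t1 → x n = t1 := by
    intro m n hmn hm
    induction n, hmn using Nat.le_induction with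
    | base => exact hm
    | succ n _ ih => exact (e1 _).1 (ih ▸ hx n)
  have abs2 : ∀ m n, m ≤ n → x m = t2 → x n = t2 := by
    intro m n hmn hm
    induction n, hmn using Nat.le_induction with
    | base => exact hm
    | succ n _ ih => exact (e2 _).1 (ih ▸ hx n)
  rintro ⟨n, hn⟩
  replace hn : x n = t1 := by simpa [ht] using hn
  simp only [ht, Set.mem_singleton_iff]
  -- Among the first `card V + 1` vertices one occurs twice, hence is a sink.
  have hlt : Fintype.card V < Fintype.card (Fin (Fintype.card V + 1)) := by simp
  obtain ⟨i, j, hij, hxij⟩ : ∃ i j : ℕ, (i < j ∧ j ≤ Fintype.card V) ∧ x i = x j := by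
    obtain ⟨i, j, hij, h⟩ := Fintype.exists_ne_map_eq_of_card_lt
      (fun i : Fin (Fintype.card V + 1) => x i) hlt
    rcases lt_or_gt_of_ne hij with hlt | hlt
    · exact ⟨i, j, ⟨hlt, by omega⟩, h⟩
    · exact ⟨j, i, ⟨hlt, by omega⟩, h.symm⟩
  have hcyc : Relation.TransGen G.E (x i) (x i) := by
    have : ∀ m, i + 1 ≤ m → Relation.TransGen G.E (x i) (x m) := by
      intro m hm
      induction m, hm using Nat.le_induction with
      | base => exact .single (hx i)
      | succ m _ ih => exact ih.tail (hx m)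
    simpa only [← hxij] using this j hij.1
  by_cases hi1 : x i = t1
  · exact abs1 i _ (by omega) hi1
  by_cases hi2 : x i = t2
  · have ha := abs1 n (max n i) (le_max_left _ _) hn
    have hb := abs2 i (max n i) (le_max_right _ _) hi2
    exact absurd (ha.symm.trans hb) hne
  · exact absurd hcyc (hacyc _ hi1 hi2)

end

end RBid

open RBid MeasureTheory in
/-- Every discrete reachability bidding game with
random-based tie-breaking that is played on a DAG is determined:
`val1(G,c) = val2(G,c)` at every configuration `c`. -/
theorem stmt_12 (μ : Measure (ℕ → Fin 2)) (hμ : IsCoin μ)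
    {V : Type} [Fintype V] (G : Game V) (t1 t2 : V) (hdag : IsDAG G t1 t2)
    (c : Conf V) (hc : c.B1 + c.B2 = G.N) :
    val1 μ G c = val2 μ G c := by
  have hPr : ∀ σ1 σ2 : Strat V, Legal G 0 σ1 → Legal G 1 σ2 →
      Pr μ G σ1 σ2 c = winProb G σ1 σ2 (Fintype.card V) ([], c, 0) := fun σ1 σ2 h1 h2 => by
    simp only [Pr, wins_iff hdag h1 h2, measure_path hμ]
  obtain ⟨τ1, hτ1, hlow⟩ := exists_strat_one G (Fintype.card V)
  obtain ⟨τ2, hτ2, hupp⟩ := exists_strat_two G (Fintype.card V)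
  apply le_antisymm
  · exact iSup_iInf_le_iInf_iSup _
  · calc val2 μ G c ≤ gval G (Fintype.card V) c :=
          iInf_le_of_le ⟨τ2, hτ2⟩ (iSup_le fun σ1 =>
            (hPr _ _ σ1.2 hτ2).trans_le (hupp _ σ1.2 c))
      _ ≤ val1 μ G c :=
          le_iSup_of_le ⟨τ1, hτ1⟩ (le_iInf fun σ2 =>
            (hlow _ σ2.2 c).trans_eq (hPr _ _ hτ1 σ2.2).symm)
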